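/- For the map Π(x) = (1 + c(x^{−2} − 1))^{−1/2} with c ∈ (0,1), the iterates Πⁿ(x₀) converge monotonically to 1 for every x₀ > 0. -/

import Mathlib

open Filter

/-- For the map `P(x) = (1 + c(x⁻² − 1))^{−1/2}` with `c ∈ (0,1)`, the iterates
from any `x₀ > 0` converge monotonically to `1`. -/
theorem hopf_map_monotone_convergence (c : ℝ) (hc : c ∈ Set.Ioo (0 : ℝ) 1) :
    let P : ℝ → ℝ := fun x => (1 + c * ((x ^ 2)⁻¹ - 1)) ^ (-(1 / 2) : ℝ)
    ∀ x₀ : ℝ, 0 < x₀ →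
      Tendsto (fun n : ℕ => P^[n] x₀) atTop (nhds 1) ∧
      (x₀ ≤ 1 → Monotone fun n : ℕ => P^[n] x₀) ∧
      (1 ≤ x₀ → Antitone fun n : ℕ => P^[n] x₀) := by
  obtain ⟨hc0, hc1⟩ := hc
  intro P x₀ hx
  obtain ⟨a, ha⟩ : ∃ a : ℝ, a = (x₀ ^ 2)⁻¹ := ⟨_, rfl⟩
  have ha0 : 0 < a := by rw [ha]; positivity
  have hpos : ∀ n : ℕ, 0 < 1 + c ^ n * (a - 1) := by
    intro n
    have h1 : c ^ n ≤ 1 := pow_le_one₀ hc0.le hc1.le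
    have h2 : 0 < c ^ n := by positivity
    nlinarith [mul_pos h2 ha0]
  have hsq : ∀ y : ℝ, 0 < y → ((y ^ (-(1 / 2) : ℝ)) ^ 2)⁻¹ = y := by
    intro y hy
    rw [← Real.rpow_natCast, ← Real.rpow_mul hy.le, ← Real.rpow_neg hy.le]
    norm_num
  have hform : ∀ n : ℕ, P^[n] x₀ = (1 + c ^ n * (a - 1)) ^ (-(1 / 2) : ℝ) := by
    intro n
    induction n with
    | zero =>
      have h : (1 + c ^ 0 * (a - 1)) = x₀ ^ (-2 : ℝ) := by
        rw [ha, Real.rpow_neg hx.le]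
        norm_num
      rw [h, ← Real.rpow_mul hx.le]
      norm_num
    | succ k ih =>
      rw [Function.iterate_succ_apply', ih]
      change (1 + c * (((_ : ℝ) ^ 2)⁻¹ - 1)) ^ (-(1 / 2) : ℝ) = _
      rw [hsq _ (hpos k)]
      congr 1
      ring
  have hfun : (fun n : ℕ => P^[n] x₀) = fun n : ℕ => (1 + c ^ n * (a - 1)) ^ (-(1 / 2) : ℝ) :=
    funext hform
  rw [hfun]
  have hanti : ∀ m n : ℕ, m ≤ n → c ^ n ≤ c ^ m := fun m n h =>
    pow_le_pow_of_le_one hc0.le hc1.le h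
  refine ⟨?_, ?_, ?_⟩
  · have h1 : Tendsto (fun n : ℕ => 1 + c ^ n * (a - 1)) atTop (nhds (1 + 0 * (a - 1))) :=
      ((tendsto_pow_atTop_nhds_zero_of_lt_one hc0.le hc1).mul_const _).const_add _
    have h2 := h1.rpow_const (p := (-(1 / 2) : ℝ)) (Or.inl (by norm_num))
    simpa using h2
  · intro hx1 m n hmn
    have ha1 : 1 ≤ a := by
      rw [ha]; exact (one_le_inv₀ (by positivity)).2 (pow_le_one₀ hx.le hx1)
    refine Real.rpow_le_rpow_of_nonpos (hpos n) ?_ (by norm_num)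
    nlinarith [hanti m n hmn]
  · intro hx1 m n hmn
    have ha1 : a ≤ 1 := by
      rw [ha]; exact inv_le_one_of_one_le₀ (one_le_pow₀ hx1)
    refine Real.rpow_le_rpow_of_nonpos (hpos m) ?_ (by norm_num)
    nlinarith [hanti m n hmn]
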